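/- Let k be an algebraically closed field of characteristic zero and let f ∈ k[x_0, x_1, x_2] be a squarefree homogeneous polynomial of degree d ≥ 2. Then the Hessian polynomial h_f is identically zero if and only if there exist a nonzero point p ∈ k^3 and homogeneous linear forms ℓ_1,…,ℓ_d ∈ k[x_0, x_1, x_2], pairwise non-proportional, each vanishing at p, such that f = ℓ_1·ℓ_2·⋯·ℓ_d; that is, if and only if V(f) ⊂ P^2 consists of d distinct lines through a common point (a cone). -/

import Mathlib

open MvPolynomial

/-- The Hessian polynomial of a multivariate polynomial: the determinant of the
matrix of second partial derivatives. -/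
noncomputable def hessianDet {k : Type*} [CommRing k] {m : ℕ}
    (f : MvPolynomial (Fin m) k) : MvPolynomial (Fin m) k :=
  Matrix.det (Matrix.of fun i j => pderiv i (pderiv j f))

/-!
A vector `v ≠ 0` in the kernel of the Hessian matrix defines a derivation killing all partial
derivatives of `f`, so these are algebraically dependent. Following Gordan and Noether,
differentiate a relation `p(∇f) = 0` of minimal degree: the vector `h = (∇p)(∇f)` is nonzero, and
the derivation `∑ᵢ hᵢ ∂/∂xᵢ` kills both the `∂ⱼf` and the `hᵢ`. Hence `∂ⱼf(x + t h) = ∂ⱼf(x)`, and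
comparing top coefficients in `t` gives `∂ⱼf(h) = 0`: the point `h` lies in the singular locus of
`V(f)`. As `f` is squarefree, that locus is finite in `ℙ²`, so `h` is a multiple of a constant
vector `q`, and the derivative of `f` along `q` vanishes. Then `f` is a binary form in two linear
forms vanishing at `q`, and such a form splits into linear factors over an algebraically closed
field.
-/

section Derivations

variable {σ R : Type*} [CommRing R]

theorem derivation_comm_of_forall_X {D E : Derivation R (MvPolynomial σ R) (MvPolynomial σ R)}
    (hX : ∀ i, D (E (X i)) = E (D (X i))) (u : MvPolynomial σ R) : D (E u) = E (D u) := by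
  induction u using MvPolynomial.induction_on with
  | C a => simp only [derivation_C, map_zero]
  | add p q hp hq => simp only [map_add, hp, hq]
  | mul_X p i hp =>
    simp only [Derivation.leibniz, map_add, smul_eq_mul, hp, hX]
    ring

theorem pderiv_pderiv_comm (i j : σ) (u : MvPolynomial σ R) :
    pderiv i (pderiv j u) = pderiv j (pderiv i u) := by
  classical
  refine derivation_comm_of_forall_X (fun l => ?_) u
  simp [pderiv_X, Pi.single_apply, apply_ite]

theorem derivation_aeval [Fintype σ] {S M : Type*} [CommRing S] [Algebra R S] [AddCommGroup M]
    [Module S M] [Module R M] (D : Derivation R S M) (g : σ → S) (u : MvPolynomial σ R) :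
    D (aeval g u) = ∑ i, aeval g (pderiv i u) • D (g i) := by
  classical
  induction u using MvPolynomial.induction_on with
  | C a => simp
  | add p q hp hq => simp [hp, hq, add_smul, Finset.sum_add_distrib]
  | mul_X p j hp =>
    simp [hp, pderiv_X, Pi.single_apply, add_smul, Finset.sum_add_distrib, Finset.smul_sum,
      mul_smul, apply_ite (aeval g)]

theorem mkDerivation_apply_eq_sum [Fintype σ] (h : σ → MvPolynomial σ R) (u : MvPolynomial σ R) :
    mkDerivation R h u = ∑ i, pderiv i u * h i := by
  simpa using derivation_aeval (mkDerivation R h) X u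

theorem totalDegree_pderiv_lt {i : σ} {u : MvPolynomial σ R} (hu : pderiv i u ≠ 0) :
    (pderiv i u).totalDegree < u.totalDegree := by
  have coeff_bound : ∀ m ∈ (pderiv i u).support, m.degree + 1 ≤ u.totalDegree := fun m hm => by
    rw [mem_support_iff, coeff_pderiv] at hm
    have degree_le : (m + Finsupp.single i 1).degree ≤ u.totalDegree :=
      le_totalDegree (mem_support_iff.mpr (left_ne_zero_of_mul hm))
    rwa [map_add, Finsupp.degree_single] at degree_le
  obtain ⟨m₀, hm₀⟩ := support_nonempty.mpr hu
  exact (Finset.sup_lt_iff (by have := coeff_bound m₀ hm₀; simp; omega)).mpr coeff_bound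

theorem pderiv_eq_zero_of_dvd [IsDomain R] {i : σ} {g : MvPolynomial σ R}
    (hg : g ∣ pderiv i g) : pderiv i g = 0 := by
  by_contra hne
  exact (totalDegree_pderiv_lt hne).not_ge (totalDegree_le_of_dvd_of_isDomain hg hne)

theorem eq_C_of_pderiv_eq_zero [IsAddTorsionFree R] {u : MvPolynomial σ R}
    (hu : ∀ i, pderiv i u = 0) : u = C (constantCoeff u) := by
  apply MvPolynomial.coe_injective
  refine MvPowerSeries.pderiv.ext (fun i => ?_) ?_
  · simp [MvPowerSeries.pderiv_coe, hu]
  · rw [← MvPowerSeries.coeff_zero_eq_constantCoeff_apply, coeff_coe, coe_C,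
      MvPowerSeries.constantCoeff_C, constantCoeff_eq]

theorem constantCoeff_eq_zero_of_isHomogeneous {n : ℕ} (hn : n ≠ 0) {u : MvPolynomial σ R}
    (hom : u.IsHomogeneous n) : constantCoeff u = 0 :=
  hom.coeff_eq_zero (by simpa using hn.symm)

theorem eq_zero_of_isHomogeneous_of_pderiv_eq_zero [IsAddTorsionFree R] {n : ℕ} (hn : n ≠ 0)
    {u : MvPolynomial σ R} (hom : u.IsHomogeneous n) (hu : ∀ i, pderiv i u = 0) : u = 0 := by
  rw [eq_C_of_pderiv_eq_zero hu, constantCoeff_eq_zero_of_isHomogeneous hn hom, C_0]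

/-- The directional derivative `∑ᵢ qᵢ ∂/∂xᵢ` along the constant vector `q`. -/
noncomputable def dirDeriv (q : σ → R) : Derivation R (MvPolynomial σ R) (MvPolynomial σ R) :=
  mkDerivation R fun i => C (q i)

theorem dirDeriv_pderiv (q : σ → R) (j : σ) (u : MvPolynomial σ R) :
    dirDeriv q (pderiv j u) = pderiv j (dirDeriv q u) := by
  classical
  refine derivation_comm_of_forall_X (fun i => ?_) u
  simp [dirDeriv, pderiv_X, Pi.single_apply, apply_ite]

theorem isHomogeneous_dirDeriv [Finite σ] (q : σ → R) {n : ℕ} {u : MvPolynomial σ R}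
    (hu : u.IsHomogeneous n) : (dirDeriv q u).IsHomogeneous (n - 1) := by
  cases nonempty_fintype σ
  rw [dirDeriv, mkDerivation_apply_eq_sum]
  exact IsHomogeneous.sum _ _ _ fun i _ => by simpa [mul_comm] using hu.pderiv.C_mul (q i)

theorem dirDeriv_eq_C_eval (q : σ → R) {ℓ : MvPolynomial σ R} (hℓ : ℓ.IsHomogeneous 1) :
    dirDeriv q ℓ = C (eval q ℓ) := by
  rw [← mem_homogeneousSubmodule, homogeneousSubmodule_one_eq_span_X] at hℓ
  induction hℓ using Submodule.span_induction with
  | mem _ hX => obtain ⟨i, rfl⟩ := hX; simp [dirDeriv]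
  | zero => simp
  | add _ _ _ _ hu hv => simp [hu, hv]
  | smul a _ _ hu => simp [hu, smul_eq_C_mul]

end Derivations

section JacobianCriterion

theorem exists_aeval_derivative_ne_zero {A S : Type*} [CommRing A] [IsAddTorsionFree A]
    [CommRing S] [Algebra A S] [FaithfulSMul A S] {x : S} (hx : IsAlgebraic A x) :
    ∃ p : Polynomial A, p.aeval x = 0 ∧ p.derivative.aeval x ≠ 0 := by
  obtain ⟨p, ⟨hp, root⟩, minimal⟩ := exists_minimalFor_of_wellFoundedLT
    (fun p : Polynomial A => p ≠ 0 ∧ p.aeval x = 0) Polynomial.natDegree hx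
  have natDegree_ne_zero : p.natDegree ≠ 0 := fun hdeg => by
    rw [Polynomial.eq_C_of_natDegree_eq_zero hdeg] at hp root
    simp_all
  have derivative_lt := Polynomial.natDegree_derivative_lt natDegree_ne_zero
  have derivative_ne_zero : p.derivative ≠ 0 :=
    Polynomial.derivative_eq_zero.not.mpr natDegree_ne_zero
  exact ⟨p, root, fun derivative_root =>
    derivative_lt.not_ge (minimal ⟨derivative_ne_zero, derivative_root⟩ derivative_lt.le)⟩

theorem derivation_eq_zero_of_isAlgebraic {A S M : Type*} [CommRing A] [IsAddTorsionFree A]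
    [CommRing S] [IsDomain S] [Algebra A S] [FaithfulSMul A S] [Algebra.IsAlgebraic A S]
    [AddCommGroup M] [Module S M] [Module.IsTorsionFree S M] [Module A M]
    (D : Derivation A S M) : D = 0 := by
  ext x
  obtain ⟨p, root, derivative_ne⟩ :=
    exists_aeval_derivative_ne_zero (Algebra.IsAlgebraic.isAlgebraic (R := A) x)
  have chain_rule := D.map_aeval p x
  rw [root, map_zero, eq_comm] at chain_rule
  exact (smul_eq_zero.mp chain_rule).resolve_left derivative_ne

/-- A `k`-derivation `D` vanishing on a subalgebra `A`, regarded as a derivation over `A`. -/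
def derivationOfVanishing {k S : Type*} [CommRing k] [CommRing S] [Algebra k S]
    (A : Subalgebra k S) (D : Derivation k S S) (hA : ∀ a ∈ A, D a = 0) : Derivation A S S where
  toFun := D
  map_add' := D.map_add
  map_smul' a s := by simp [Subalgebra.smul_def, hA a a.2]
  map_one_eq_zero' := D.map_one_eq_zero
  leibniz' := D.leibniz

theorem derivation_eq_zero_of_isTranscendenceBasis {k S ι : Type*} [CommRing k] [Nontrivial k]
    [CommRing S] [IsDomain S] [CharZero S] [Algebra k S] {g : ι → S}
    (hg : IsTranscendenceBasis k g) {D : Derivation k S S} (hD : ∀ j, D (g j) = 0) : D = 0 := by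
  have vanishing : ∀ a ∈ Algebra.adjoin k (Set.range g), D a = 0 := fun a ha =>
    Derivation.eqOn_adjoin (D2 := 0) (by rintro _ ⟨j, rfl⟩; exact hD j) ha
  have : Algebra.IsAlgebraic (Algebra.adjoin k (Set.range g)) S := hg.isAlgebraic
  have : IsAddTorsionFree (Algebra.adjoin k (Set.range g)) :=
    Function.Injective.isAddTorsionFree
      (algebraMap (Algebra.adjoin k (Set.range g)) S).toAddMonoidHom Subtype.val_injective
  ext x
  exact DFunLike.congr_fun
    (derivation_eq_zero_of_isAlgebraic (derivationOfVanishing _ D vanishing)) x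

theorem not_algebraicIndependent_of_derivation_eq_zero {k σ : Type*} [CommRing k] [IsDomain k]
    [CharZero k] [Finite σ] {g : σ → MvPolynomial σ k}
    {D : Derivation k (MvPolynomial σ k) (MvPolynomial σ k)} (hD : D ≠ 0)
    (hg : ∀ j, D (g j) = 0) : ¬ AlgebraicIndependent k g := fun indep =>
  have basis : IsTranscendenceBasis k g :=
    indep.isTranscendenceBasis_of_lift_trdeg_le_of_finite (by simp [trdeg_of_isDomain])
  hD (derivation_eq_zero_of_isTranscendenceBasis basis hg)

end JacobianCriterion

section GordanNoether

theorem hessianDet_eq_zero_iff {k : Type*} [CommRing k] [IsDomain k] {n : ℕ}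
    (f : MvPolynomial (Fin n) k) :
    hessianDet f = 0 ↔
      ∃ v : Fin n → MvPolynomial (Fin n) k, v ≠ 0 ∧ ∀ j, mkDerivation k v (pderiv j f) = 0 := by
  rw [hessianDet, ← Matrix.exists_mulVec_eq_zero_iff]
  refine exists_congr fun v => and_congr_right fun _ => ?_
  simp only [funext_iff, Matrix.mulVec, dotProduct, Matrix.of_apply, Pi.zero_apply,
    mkDerivation_apply_eq_sum, pderiv_pderiv_comm]

theorem exists_aeval_pderiv_ne_zero {R S σ : Type*} [CommRing R] [IsAddTorsionFree R]
    [CommRing S] [Algebra R S] [FaithfulSMul R S] {g : σ → S} (hg : ¬ AlgebraicIndependent R g) :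
    ∃ p : MvPolynomial σ R, aeval g p = 0 ∧ ∃ i, aeval g (pderiv i p) ≠ 0 := by
  simp only [algebraicIndependent_iff, not_forall] at hg
  obtain ⟨p, ⟨relation, hp⟩, minimal⟩ := exists_minimalFor_of_wellFoundedLT
    (fun p : MvPolynomial σ R => aeval g p = 0 ∧ p ≠ 0) totalDegree (by simpa using hg)
  refine ⟨p, relation, ?_⟩
  by_contra! pderiv_relation
  have pderiv_eq_zero : ∀ i, pderiv i p = 0 := fun i => by
    by_contra hne
    have pderiv_lt := totalDegree_pderiv_lt hne
    exact pderiv_lt.not_ge (minimal ⟨pderiv_relation i, hne⟩ pderiv_lt.le)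
  rw [eq_C_of_pderiv_eq_zero pderiv_eq_zero] at hp relation
  simp_all

theorem exists_mkDerivation_pderiv_eq_zero {R σ : Type*} [CommRing R] [IsAddTorsionFree R]
    [Finite σ] {f : MvPolynomial σ R} (hf : ¬ AlgebraicIndependent R fun i => pderiv i f) :
    ∃ h : σ → MvPolynomial σ R, h ≠ 0 ∧ (∀ j, mkDerivation R h (pderiv j f) = 0) ∧
      ∀ i, mkDerivation R h (h i) = 0 := by
  cases nonempty_fintype σ
  obtain ⟨p, relation, i₀, hi₀⟩ := exists_aeval_pderiv_ne_zero hf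
  have kills_gradient : ∀ j, mkDerivation R
      (fun i => aeval (fun i => pderiv i f) (pderiv i p)) (pderiv j f) = 0 := fun j => by
    have differentiated_relation := derivation_aeval (pderiv j) (fun i => pderiv i f) p
    rw [relation, map_zero] at differentiated_relation
    rw [mkDerivation_apply_eq_sum, differentiated_relation]
    exact Finset.sum_congr rfl fun i _ => by rw [pderiv_pderiv_comm, smul_eq_mul, mul_comm]
  refine ⟨_, fun h_eq_zero => hi₀ (congrFun h_eq_zero i₀), kills_gradient, fun i => ?_⟩
  simp only [derivation_aeval, kills_gradient, smul_zero, Finset.sum_const_zero]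

variable {σ R : Type*} [CommRing R]

/-- The substitution `u ↦ u(x + t h)`, where `t` is the variable of the outer polynomial ring. -/
noncomputable def taylorShift (h : σ → MvPolynomial σ R) :
    MvPolynomial σ R →ₐ[R] Polynomial (MvPolynomial σ R) :=
  aeval fun i => Polynomial.C (X i) + Polynomial.X * Polynomial.C (h i)

theorem coeff_zero_taylorShift (h : σ → MvPolynomial σ R) (u : MvPolynomial σ R) :
    (taylorShift h u).coeff 0 = u := by
  have eval_zero_comp : ((Polynomial.aeval (0 : MvPolynomial σ R)).restrictScalars R).comp
      (taylorShift h) = AlgHom.id R _ := by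
    ext i
    simp [taylorShift]
  simpa [Polynomial.coeff_zero_eq_aeval_zero] using DFunLike.congr_fun eval_zero_comp u

theorem succ_nsmul_coeff_taylorShift {h : σ → MvPolynomial σ R}
    (hh : ∀ i, mkDerivation R h (h i) = 0) (u : MvPolynomial σ R) (m : ℕ) :
    (m + 1) • (taylorShift h u).coeff (m + 1) = mkDerivation R h ((taylorShift h u).coeff m) := by
  induction u using MvPolynomial.induction_on generalizing m with
  | C a => cases m <;> simp [taylorShift, Polynomial.algebraMap_apply, Polynomial.coeff_C]
  | add p q hp hq => simp only [map_add, Polynomial.coeff_add, smul_add, hp, hq]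
  | mul_X p i hp =>
    have shift_mul_X : taylorShift h (p * X i) = taylorShift h p * Polynomial.C (X i) +
        Polynomial.X * (taylorShift h p * Polynomial.C (h i)) := by
      simp only [taylorShift, map_mul, aeval_X]
      ring
    rw [shift_mul_X]
    cases m with
    | zero =>
      have coeff_one : (taylorShift h p).coeff 1 = mkDerivation R h ((taylorShift h p).coeff 0) :=
        by simpa using hp 0
      simp only [Polynomial.coeff_add, Polynomial.coeff_X_mul, Polynomial.coeff_mul_C, zero_add,
        Polynomial.coeff_X_mul_zero, Derivation.leibniz, mkDerivation_X, smul_eq_mul, coeff_one,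
        one_smul, add_zero]
      ring
    | succ m =>
      simp only [Polynomial.coeff_add, Polynomial.coeff_X_mul, Polynomial.coeff_mul_C, map_add,
        Derivation.leibniz, mkDerivation_X, hh, smul_eq_mul, ← hp]
      simp only [nsmul_eq_mul, Nat.cast_add, Nat.cast_one]
      ring

theorem taylorShift_eq_C [IsDomain R] [CharZero R] {h : σ → MvPolynomial σ R}
    (hh : ∀ i, mkDerivation R h (h i) = 0) {u : MvPolynomial σ R} (hu : mkDerivation R h u = 0) :
    taylorShift h u = Polynomial.C u := by
  have coeff_succ : ∀ m, (taylorShift h u).coeff (m + 1) = 0 := fun m => by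
    refine (nsmul_eq_zero_iff_right m.succ_ne_zero).mp ?_
    induction m with
    | zero => rw [succ_nsmul_coeff_taylorShift hh, coeff_zero_taylorShift, hu]
    | succ m ih =>
      rw [succ_nsmul_coeff_taylorShift hh, (nsmul_eq_zero_iff_right m.succ_ne_zero).mp ih, map_zero]
  ext1 m
  cases m with
  | zero => rw [coeff_zero_taylorShift, Polynomial.coeff_C_zero]
  | succ m => rw [coeff_succ, Polynomial.coeff_C_succ]

theorem coeff_degree_prod_C_add_X_mul_C {S : Type*} [CommSemiring S] (x h : σ → S)
    (e : σ →₀ ℕ) :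
    (e.prod fun i n => (Polynomial.C (x i) + Polynomial.X * Polynomial.C (h i)) ^ n).coeff
      e.degree = e.prod fun i n => h i ^ n := by
  have prod_eq : ∀ {M : Type _} [CommMonoid M] (g : σ → M),
      (e.prod fun i n => g i ^ n) = (e.toMultiset.map g).prod := fun g => by
    rw [Finsupp.toMultiset_map, Finsupp.prod_toMultiset,
      Finsupp.prod_mapDomain_index pow_zero pow_add]
  have natDegree_le : ∀ i, (Polynomial.C (x i) + Polynomial.X * Polynomial.C (h i)).natDegree ≤ 1 :=
    fun i => by compute_degree
  have top := Polynomial.coeff_multiset_prod_of_natDegree_le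
    (e.toMultiset.map fun i => Polynomial.C (x i) + Polynomial.X * Polynomial.C (h i)) 1
    (by simpa using fun i _ => natDegree_le i)
  rw [prod_eq, prod_eq]
  simpa [Finsupp.card_toMultiset, Finsupp.degree_apply, Finsupp.sum] using top

theorem coeff_taylorShift_of_isHomogeneous (h : σ → MvPolynomial σ R) {u : MvPolynomial σ R}
    {m : ℕ} (hu : u.IsHomogeneous m) : (taylorShift h u).coeff m = aeval h u := by
  rw [u.as_sum, map_sum, map_sum, Polynomial.finsetSum_coeff]
  refine Finset.sum_congr rfl fun e he => ?_
  rw [taylorShift, aeval_monomial, aeval_monomial, Polynomial.algebraMap_apply,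
    Polynomial.coeff_C_mul, hu.degree_eq_sum_deg_support he]
  congr 1
  exact coeff_degree_prod_C_add_X_mul_C X h e

theorem aeval_eq_zero_of_mkDerivation_eq_zero [IsDomain R] [CharZero R] {h : σ → MvPolynomial σ R}
    (hh : ∀ i, mkDerivation R h (h i) = 0) {u : MvPolynomial σ R} {m : ℕ} (hm : m ≠ 0)
    (hom : u.IsHomogeneous m) (hu : mkDerivation R h u = 0) : aeval h u = 0 := by
  rw [← coeff_taylorShift_of_isHomogeneous h hom, taylorShift_eq_C hh hu, Polynomial.coeff_C,
    if_neg hm]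

end GordanNoether

section Elimination

theorem exists_C_mem_span_pair {A : Type*} [CommRing A] [IsDomain A]
    [UniqueFactorizationMonoid A] {p q : Polynomial A} (hp : Irreducible p) (hpq : ¬ p ∣ q) :
    ∃ r : A, r ≠ 0 ∧ Polynomial.C r ∈ Ideal.span {p, q} := by
  by_cases hdeg : p.natDegree = 0
  · have hC := Polynomial.eq_C_of_natDegree_eq_zero hdeg
    refine ⟨p.coeff 0, fun h0 => hp.ne_zero (by rw [hC, h0, Polynomial.C_0]), ?_⟩
    rw [← hC]
    exact Ideal.subset_span (Set.mem_insert p {q})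
  have primitive : p.IsPrimitive := hp.isPrimitive hdeg
  let K := FractionRing A
  have irreducible_map : Irreducible (p.map (algebraMap A K)) :=
    primitive.irreducible_iff_irreducible_map_fraction_map.mp hp
  have coprime : IsCoprime (p.map (algebraMap A K)) (q.map (algebraMap A K)) :=
    irreducible_map.coprime_iff_not_dvd.mpr
      fun hdvd => hpq (primitive.dvd_of_fraction_map_dvd_fraction_map hdvd)
  have resultant_ne_zero : p.resultant q ≠ 0 := fun h0 => by
    have resultant_map_ne_zero := Polynomial.resultant_ne_zero _ _ coprime
    simp only [Polynomial.natDegree_map_eq_of_injective (IsFractionRing.injective A K),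
      Polynomial.resultant_map_map, h0, map_zero, ne_eq, not_true_eq_false] at resultant_map_ne_zero
  obtain ⟨a, b, -, -, hab⟩ := Polynomial.exists_mul_add_mul_eq_C_resultant p q le_rfl le_rfl
    (Or.inl hdeg)
  exact ⟨p.resultant q, resultant_ne_zero, Ideal.mem_span_pair.mpr ⟨a, b, by rw [← hab]; ring⟩⟩

/-- The identification of a polynomial ring in the variables `σ ≃ Option τ` with polynomials in
one variable over the polynomial ring in the variables `τ`. -/
noncomputable def toPolynomialOption (k : Type*) [CommRing k] {σ τ : Type*} (e : Option τ ≃ σ) :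
    MvPolynomial σ k ≃ₐ[k] Polynomial (MvPolynomial τ k) :=
  (renameEquiv k e.symm).trans (optionEquivLeft k τ)

theorem toPolynomialOption_rename {k σ τ : Type*} [CommRing k] (e : Option τ ≃ σ)
    (r : MvPolynomial τ k) :
    toPolynomialOption k e (rename (fun i => e (some i)) r) = Polynomial.C r := by
  have comp_eq : (toPolynomialOption k e).toAlgHom.comp (rename fun i => e (some i)) =
      IsScalarTower.toAlgHom k (MvPolynomial τ k) (Polynomial (MvPolynomial τ k)) := by
    ext1 i
    simp [toPolynomialOption]
  exact DFunLike.congr_fun comp_eq r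

/-- The hypothesis says that `V(P)` has codimension at least two, so its projection along one
coordinate is not dense. -/
theorem exists_rename_mem_of_forall_prime_not_le_span {k σ τ : Type*} [CommRing k] [IsDomain k]
    [UniqueFactorizationMonoid k] (e : Option τ ≃ σ) {P : Ideal (MvPolynomial σ k)} [P.IsPrime]
    (hP : ∀ g, Prime g → ¬ P ≤ Ideal.span {g}) :
    ∃ r : MvPolynomial τ k, r ≠ 0 ∧ rename (fun i => e (some i)) r ∈ P := by
  have P_ne_bot : P ≠ ⊥ := fun h => hP (X (e none)) X_prime (h ▸ bot_le)
  obtain ⟨g, g_mem, g_prime⟩ := Ideal.IsPrime.exists_mem_prime_of_ne_bot ‹_› P_ne_bot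
  obtain ⟨u, u_mem, hu⟩ := SetLike.not_le_iff_exists.mp (hP g g_prime)
  rw [Ideal.mem_span_singleton] at hu
  let φ := toPolynomialOption k e
  obtain ⟨r, hr, r_mem⟩ := exists_C_mem_span_pair (p := φ g) (q := φ u)
    ((MulEquiv.irreducible_iff φ).mpr g_prime.irreducible) ((map_dvd_iff φ).not.mpr hu)
  refine ⟨r, hr, ?_⟩
  obtain ⟨a, b, hab⟩ := Ideal.mem_span_pair.mp r_mem
  have rename_eq : rename (fun i => e (some i)) r = φ.symm a * g + φ.symm b * u :=
    φ.injective (by simp [φ, toPolynomialOption_rename, hab])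
  rw [rename_eq]
  exact P.add_mem (P.mul_mem_left _ g_mem) (P.mul_mem_left _ u_mem)

theorem coeff_aeval_X_mul_C {R S σ : Type*} [CommRing R] [CommRing S] [Algebra R S] (h : σ → S)
    (r : MvPolynomial σ R) (n : ℕ) :
    (aeval (fun i => Polynomial.X * Polynomial.C (h i)) r).coeff n =
      aeval h (homogeneousComponent n r) := by
  induction r using MvPolynomial.induction_on' with
  | monomial e a =>
    have prod_eq : (e.prod fun i m => (Polynomial.X * Polynomial.C (h i)) ^ m) =
        Polynomial.C (e.prod fun i m => h i ^ m) * Polynomial.X ^ e.degree := by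
      simp only [Finsupp.prod, mul_pow, Finset.prod_mul_distrib, Finset.prod_pow_eq_pow_sum,
        ← Finsupp.degree_apply, map_prod, map_pow]
      ring
    rw [aeval_monomial, prod_eq, homogeneousComponent_of_mem (isHomogeneous_monomial a rfl),
      Polynomial.algebraMap_apply, Polynomial.coeff_C_mul, Polynomial.coeff_C_mul_X_pow]
    split_ifs <;> simp [aeval_monomial]
  | add p q hp hq => simp only [map_add, Polynomial.coeff_add, hp, hq]

theorem exists_not_dvd_pderiv_of_squarefree {k σ : Type*} [Field k] [CharZero k] [Finite σ]
    {f : MvPolynomial σ k} {d : ℕ} (hd : d ≠ 0) (hsf : Squarefree f) (hom : f.IsHomogeneous d)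
    {g : MvPolynomial σ k} (hg : Prime g) : ∃ i, ¬ g ∣ pderiv i f := by
  cases nonempty_fintype σ
  by_contra! dvd_pderiv
  have dvd_f : g ∣ f := by
    have dvd_nsmul : g ∣ d • f :=
      hom.sum_X_mul_pderiv ▸ Finset.dvd_sum fun i _ => (dvd_pderiv i).mul_left _
    have isUnit_d : IsUnit (d : MvPolynomial σ k) := by
      simpa using (IsUnit.mk0 (d : k) (Nat.cast_ne_zero.mpr hd)).map (C (σ := σ))
    rwa [nsmul_eq_mul, isUnit_d.dvd_mul_left] at dvd_nsmul
  obtain ⟨r, rfl⟩ := dvd_f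
  have not_dvd_r : ¬ g ∣ r := fun ⟨s, hs⟩ =>
    hg.not_isUnit (hsf g ⟨s, by rw [hs, mul_assoc]⟩)
  have pderiv_g : ∀ i, pderiv i g = 0 := fun i => by
    have dvd_mul : g ∣ pderiv i g * r := by
      have := dvd_pderiv i
      rwa [pderiv_mul, dvd_add_left (dvd_mul_right g _)] at this
    exact pderiv_eq_zero_of_dvd ((hg.dvd_or_dvd dvd_mul).resolve_right not_dvd_r)
  have g_const : g = C (constantCoeff g) := eq_C_of_pderiv_eq_zero pderiv_g
  have constantCoeff_ne_zero : constantCoeff g ≠ 0 := fun h0 =>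
    hg.ne_zero (by rw [g_const, h0, C_0])
  exact hg.not_isUnit (g_const ▸ (IsUnit.mk0 _ constantCoeff_ne_zero).map C)

end Elimination

section BinaryForms

variable {k : Type*} [Field k] [IsAlgClosed k]

theorem exists_isHomogeneous_one_mul {n : ℕ} {r : MvPolynomial (Fin 2) k}
    (hr : r.IsHomogeneous (n + 1)) :
    ∃ ℓ r' : MvPolynomial (Fin 2) k, ℓ.IsHomogeneous 1 ∧ r'.IsHomogeneous n ∧ r = ℓ * r' := by
  let p : Polynomial k := aeval ![Polynomial.X, 1] r
  suffices ∃ l q : Polynomial k, l.natDegree ≤ 1 ∧ q.natDegree ≤ n ∧ p = l * q by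
    obtain ⟨l, q, hl, hq, hp⟩ := this
    refine ⟨l.homogenize 1, q.homogenize n, Polynomial.isHomogeneous_homogenize l,
      Polynomial.isHomogeneous_homogenize q, ?_⟩
    rw [← Polynomial.homogenize_mul l q hl hq, ← hp, add_comm,
      Polynomial.homogenize_eq_of_isHomogeneous hr rfl]
  rcases le_or_gt p.natDegree n with hn | hn
  -- `r` is divisible by the linear form vanishing at the point at infinity.
  · exact ⟨1, p, by simp, hn, (one_mul p).symm⟩
  · obtain ⟨t, ht⟩ := IsAlgClosed.exists_root p
      (Polynomial.natDegree_pos_iff_degree_pos.mp (n.zero_le.trans_lt hn)).ne'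
    obtain ⟨q, hq⟩ := Polynomial.dvd_iff_isRoot.mpr ht
    have natDegree_le : p.natDegree ≤ n + 1 := by
      simpa using aeval_natDegree_le r hr.totalDegree_le ![Polynomial.X, 1]
        (n := 1) (by simp [Fin.forall_fin_two])
    have natDegree_p : p.natDegree = 1 + q.natDegree := by
      rw [hq, Polynomial.natDegree_mul (Polynomial.X_sub_C_ne_zero t), Polynomial.natDegree_X_sub_C]
      rintro rfl
      simp [hq] at hn
    exact ⟨Polynomial.X - Polynomial.C t, q, by simp, by omega, hq⟩

theorem exists_eq_prod_isHomogeneous_one {n : ℕ} {r : MvPolynomial (Fin 2) k}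
    (hr : r.IsHomogeneous (n + 1)) :
    ∃ ℓ : Fin (n + 1) → MvPolynomial (Fin 2) k, (∀ i, (ℓ i).IsHomogeneous 1) ∧ r = ∏ i, ℓ i := by
  induction n generalizing r with
  | zero => exact ⟨fun _ => r, fun _ => hr, by simp⟩
  | succ n ih =>
    obtain ⟨ℓ₀, r', hℓ₀, hr', rfl⟩ := exists_isHomogeneous_one_mul hr
    obtain ⟨ℓ, hℓ, rfl⟩ := ih hr'
    exact ⟨Fin.cons ℓ₀ ℓ, Fin.cases hℓ₀ hℓ, (Fin.prod_cons ℓ₀ ℓ).symm⟩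

theorem aeval_ne_zero_of_linearIndependent_of_isHomogeneous_one {R S σ : Type*} [CommRing R]
    [CommRing S] [Algebra R S] [Finite σ] {h : σ → S} (indep : LinearIndependent R h)
    {ℓ : MvPolynomial σ R} (hom : ℓ.IsHomogeneous 1) (hℓ : ℓ ≠ 0) : aeval h ℓ ≠ 0 := by
  cases nonempty_fintype σ
  rw [← mem_homogeneousSubmodule, homogeneousSubmodule_one_eq_span_X,
    Submodule.mem_span_range_iff_exists_fun] at hom
  obtain ⟨a, rfl⟩ := hom
  intro aeval_eq_zero
  have a_eq_zero := Fintype.linearIndependent_iff.mp indep a (by simpa using aeval_eq_zero)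
  exact hℓ (by simp [a_eq_zero])

theorem aeval_ne_zero_of_linearIndependent {S : Type*} [CommRing S] [IsDomain S]
    [Algebra k S] {h : Fin 2 → S} (indep : LinearIndependent k h) {n : ℕ}
    {r : MvPolynomial (Fin 2) k} (hom : r.IsHomogeneous n) (hr : r ≠ 0) : aeval h r ≠ 0 := by
  induction n generalizing r with
  | zero =>
    rw [totalDegree_eq_zero_iff_eq_C.mp (Nat.le_zero.mp hom.totalDegree_le)] at hr ⊢
    simpa using hr
  | succ n ih =>
    obtain ⟨ℓ, r', hℓ, hr', rfl⟩ := exists_isHomogeneous_one_mul hom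
    rw [map_mul]
    exact mul_ne_zero (aeval_ne_zero_of_linearIndependent_of_isHomogeneous_one indep hℓ
      (left_ne_zero_of_mul hr)) (ih hr' (right_ne_zero_of_mul hr))

end BinaryForms

section PlaneCurves

variable {k : Type*} [Field k] [CharZero k]

theorem not_linearIndependent_of_aeval_pderiv_eq_zero [IsAlgClosed k] {S σ : Type*} [CommRing S]
    [IsDomain S] [Algebra k S] [Finite σ] {f : MvPolynomial σ k} {d : ℕ} (hd : d ≠ 0)
    (hsf : Squarefree f) (hom : f.IsHomogeneous d) {h : σ → S}
    (hh : ∀ j, aeval h (pderiv j f) = 0) (e : Option (Fin 2) ≃ σ) :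
    ¬ LinearIndependent k fun i => h (e (some i)) := by
  intro indep
  -- The ideal of the closure of the line spanned by `h`, which lies in the singular locus.
  let P := RingHom.ker (aeval (R := k) fun i => Polynomial.X * Polynomial.C (h i))
  have mem_P : ∀ u, u ∈ P ↔ ∀ n, aeval h (homogeneousComponent n u) = 0 := fun u => by
    simp only [P, RingHom.mem_ker, Polynomial.ext_iff, coeff_aeval_X_mul_C, Polynomial.coeff_zero]
  have P_prime : P.IsPrime := RingHom.ker_isPrime _
  have P_not_le : ∀ g, Prime g → ¬ P ≤ Ideal.span {g} := fun g hg P_le => by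
    obtain ⟨j, hj⟩ := exists_not_dvd_pderiv_of_squarefree hd hsf hom hg
    refine hj (Ideal.mem_span_singleton.mp (P_le ((mem_P _).mpr fun n => ?_)))
    rw [homogeneousComponent_of_mem (hom.pderiv (i := j))]
    split_ifs
    exacts [hh j, map_zero _]
  obtain ⟨r, r_ne_zero, r_mem⟩ := exists_rename_mem_of_forall_prime_not_le_span e P_not_le
  obtain ⟨n, component_ne_zero⟩ : ∃ n, homogeneousComponent n r ≠ 0 := by
    by_contra! component_eq_zero
    exact r_ne_zero (by rw [← sum_homogeneousComponent r]; simp [component_eq_zero])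
  refine aeval_ne_zero_of_linearIndependent indep (homogeneousComponent_isHomogeneous n r)
    component_ne_zero ?_
  rw [← coeff_aeval_X_mul_C]
  simpa [P, RingHom.mem_ker, aeval_rename, Function.comp_def] using
    congrArg (Polynomial.coeff · n) r_mem

theorem exists_eq_smul_of_aeval_pderiv_eq_zero [IsAlgClosed k] {S : Type*} [CommRing S]
    [IsDomain S] [Algebra k S] {f : MvPolynomial (Fin 3) k} {d : ℕ} (hd : d ≠ 0)
    (hsf : Squarefree f) (hom : f.IsHomogeneous d) {h : Fin 3 → S}
    (hh : ∀ j, aeval h (pderiv j f) = 0) : ∃ (q : Fin 3 → k) (s : S), ∀ i, h i = q i • s := by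
  by_cases h_eq_zero : h = 0
  · exact ⟨0, 0, by simp [h_eq_zero]⟩
  obtain ⟨i₀, hi₀⟩ := Function.ne_iff.mp h_eq_zero
  have proportional : ∀ i, ∃ a : k, h i = a • h i₀ := fun i => by
    rcases eq_or_ne i₀ i with rfl | hi
    · exact ⟨1, (one_smul k _).symm⟩
    obtain ⟨e, he₀, he₁⟩ : ∃ e : Option (Fin 2) ≃ Fin 3, e (some 0) = i₀ ∧ e (some 1) = i := by
      clear hi₀
      revert i₀ i
      decide
    have dependent : ¬ LinearIndependent k ![h i₀, h i] := by
      convert not_linearIndependent_of_aeval_pderiv_eq_zero hd hsf hom hh e using 2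
      ext1 j
      fin_cases j <;> simp [he₀, he₁]
    simpa [LinearIndependent.pair_iff' hi₀, eq_comm] using dependent
  choose q hq using proportional
  exact ⟨q, h i₀, hq⟩

theorem dirDeriv_eq_zero_of_mkDerivation_smul {σ : Type*} [Finite σ] {f : MvPolynomial σ k} {d : ℕ}
    (hd : 2 ≤ d) (hom : f.IsHomogeneous d) {q : σ → k} {s : MvPolynomial σ k} (hs : s ≠ 0)
    (hf : ∀ j, mkDerivation k (fun i => q i • s) (pderiv j f) = 0) : dirDeriv q f = 0 := by
  cases nonempty_fintype σ
  refine eq_zero_of_isHomogeneous_of_pderiv_eq_zero (by omega) (isHomogeneous_dirDeriv q hom)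
    fun j => ?_
  have mul_eq_zero : s * dirDeriv q (pderiv j f) = 0 := by
    rw [← hf j, dirDeriv, mkDerivation_apply_eq_sum, mkDerivation_apply_eq_sum, Finset.mul_sum]
    exact Finset.sum_congr rfl fun i _ => by rw [smul_eq_C_mul]; ring
  rw [← dirDeriv_pderiv]
  exact (mul_eq_zero_iff_left hs).mp mul_eq_zero

theorem hessianDet_eq_zero_of_dirDeriv_eq_zero {R : Type*} [CommRing R] [IsDomain R] {n : ℕ}
    {f : MvPolynomial (Fin n) R} {q : Fin n → R} (hq : q ≠ 0) (hf : dirDeriv q f = 0) :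
    hessianDet f = 0 := by
  refine (hessianDet_eq_zero_iff f).mpr ⟨fun i => C (q i), fun h0 => hq ?_, fun j => ?_⟩
  · exact funext fun i => C_eq_zero.mp (congrFun h0 i)
  · exact (dirDeriv_pderiv q j f).trans (by rw [hf, map_zero])

theorem hessianDet_eq_zero_iff_exists_dirDeriv_eq_zero [IsAlgClosed k]
    {f : MvPolynomial (Fin 3) k} {d : ℕ} (hd : 2 ≤ d) (hsf : Squarefree f)
    (hom : f.IsHomogeneous d) : hessianDet f = 0 ↔ ∃ q : Fin 3 → k, q ≠ 0 ∧ dirDeriv q f = 0 := by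
  refine ⟨fun hessian_eq_zero => ?_, fun ⟨q, hq, hf⟩ =>
    hessianDet_eq_zero_of_dirDeriv_eq_zero hq hf⟩
  obtain ⟨v, hv, kernel⟩ := (hessianDet_eq_zero_iff f).mp hessian_eq_zero
  obtain ⟨h, hh, kills_gradient, kills_self⟩ := exists_mkDerivation_pderiv_eq_zero
    (not_algebraicIndependent_of_derivation_eq_zero (D := mkDerivation k v)
      (fun D_eq_zero => hv (funext fun i => by simp [← mkDerivation_X k v i, D_eq_zero])) kernel)
  have singular : ∀ j, aeval h (pderiv j f) = 0 := fun j =>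
    aeval_eq_zero_of_mkDerivation_eq_zero kills_self (by omega) hom.pderiv (kills_gradient j)
  obtain ⟨q, s, h_eq⟩ := exists_eq_smul_of_aeval_pderiv_eq_zero (by omega) hsf hom singular
  obtain rfl : h = fun i => q i • s := funext h_eq
  refine ⟨q, ?_, dirDeriv_eq_zero_of_mkDerivation_smul hd hom ?_ kills_gradient⟩ <;>
  · rintro rfl
    exact hh (by ext1; simp)

/-- The linear form `xᵢ - (qᵢ / q_l) x_l`. For `i ≠ l` these are the coordinates of the projection
from the point `q`, where `q_l ≠ 0`. -/
noncomputable def projCoord {K σ : Type*} [Field K] (q : σ → K) (l i : σ) : MvPolynomial σ K :=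
  X i - C (q i / q l) * X l

theorem isHomogeneous_projCoord {K σ : Type*} [Field K] (q : σ → K) (l i : σ) :
    (projCoord q l i).IsHomogeneous 1 :=
  (isHomogeneous_X K i).sub (isHomogeneous_C_mul_X _ l)

theorem eval_projCoord {K σ : Type*} [Field K] {q : σ → K} {l : σ} (hl : q l ≠ 0) (i : σ) :
    eval q (projCoord q l i) = 0 := by
  simp [projCoord, hl]

theorem aeval_projCoord_eq_self {σ : Type*} {q : σ → k} (l : σ) {f : MvPolynomial σ k}
    (hf : dirDeriv q f = 0) : aeval (projCoord q l) f = f := by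
  let specializeShift : Polynomial (MvPolynomial σ k) →ₐ[k] MvPolynomial σ k :=
    (Polynomial.aeval (-C (q l)⁻¹ * X l)).restrictScalars k
  have specialize_comp : specializeShift.comp (taylorShift fun i => C (q i)) =
      aeval (projCoord q l) := by
    ext1 i
    simp only [specializeShift, taylorShift, projCoord, AlgHom.comp_apply,
      AlgHom.restrictScalars_apply, aeval_X, map_add, map_mul, Polynomial.aeval_C,
      Polynomial.aeval_X, Algebra.algebraMap_self, RingHom.id_apply, div_eq_mul_inv]
    ring
  rw [← specialize_comp, AlgHom.comp_apply, taylorShift_eq_C (by simp) hf]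
  simp [specializeShift]

theorem exists_eq_aeval_projCoord {n d : ℕ} {f : MvPolynomial (Fin (n + 1)) k}
    (hom : f.IsHomogeneous d) {q : Fin (n + 1) → k} {l : Fin (n + 1)} (hl : q l ≠ 0)
    (hf : dirDeriv q f = 0) : ∃ r : MvPolynomial (Fin n) k, r.IsHomogeneous d ∧
      f = aeval (fun i => projCoord q l (l.succAbove i)) r := by
  let restrict : Fin (n + 1) → MvPolynomial (Fin n) k := l.insertNth 0 X
  refine ⟨aeval restrict f, ?_, ?_⟩
  · simpa using hom.aeval restrict (n := 1) (l.forall_iff_succAbove.mpr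
      ⟨by simpa [restrict] using isHomogeneous_zero _ _ _,
        fun i => by simpa [restrict] using isHomogeneous_X _ _⟩)
  · have comp_eq : (aeval fun i => projCoord q l (l.succAbove i)).comp (aeval restrict) =
        aeval (projCoord q l) := by
      refine algHom_ext (l.forall_iff_succAbove.mpr ⟨?_, fun i => ?_⟩)
      · simp [restrict, projCoord, hl]
      · simp [restrict]
    rw [← AlgHom.comp_apply, comp_eq, aeval_projCoord_eq_self l hf]

theorem ne_smul_of_squarefree_prod {R A ι : Type*} [CommSemiring R] [CommSemiring A] [Algebra R A]
    [Fintype ι] {ℓ : ι → A} (hsf : Squarefree (∏ i, ℓ i)) {i j : ι} (hij : i ≠ j)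
    (hj : ¬ IsUnit (ℓ j)) (c : R) : ℓ i ≠ c • ℓ j := by
  classical
  intro proportional
  have pair_dvd : ℓ i * ℓ j ∣ ∏ i, ℓ i := by
    rw [← Finset.prod_pair hij]
    exact Finset.prod_dvd_prod_of_subset _ _ _ (Finset.subset_univ _)
  have square_dvd : ℓ j * ℓ j ∣ ℓ i * ℓ j := by
    rw [proportional, Algebra.smul_def, mul_assoc]
    exact dvd_mul_left _ _
  exact hj (hsf _ (square_dvd.trans pair_dvd))

theorem dirDeriv_prod_eq_zero {R σ ι : Type*} [CommRing R] [Fintype ι] {q : σ → R}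
    {ℓ : ι → MvPolynomial σ R} (hom : ∀ i, (ℓ i).IsHomogeneous 1) (hq : ∀ i, eval q (ℓ i) = 0) :
    dirDeriv q (∏ i, ℓ i) = 0 :=
  Finset.prod_induction ℓ (dirDeriv q · = 0) (fun u v hu hv => by simp [hu, hv])
    (dirDeriv q).map_one_eq_zero fun i _ => by rw [dirDeriv_eq_C_eval q (hom i), hq, C_0]

theorem dirDeriv_eq_zero_iff_exists_eq_prod [IsAlgClosed k] {f : MvPolynomial (Fin 3) k} {d : ℕ}
    (hd : d ≠ 0) (hsf : Squarefree f) (hom : f.IsHomogeneous d) {q : Fin 3 → k} (hq : q ≠ 0) :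
    dirDeriv q f = 0 ↔
      ∃ ℓ : Fin d → MvPolynomial (Fin 3) k,
        (∀ i, (ℓ i).IsHomogeneous 1) ∧ (∀ i, eval q (ℓ i) = 0) ∧
        (∀ i j, i ≠ j → ∀ c : k, ℓ i ≠ c • ℓ j) ∧ f = ∏ i, ℓ i := by
  refine ⟨fun hf => ?_, fun ⟨ℓ, hℓ, vanish, _, hf⟩ => hf ▸ dirDeriv_prod_eq_zero hℓ vanish⟩
  obtain ⟨l, hl⟩ := Function.ne_iff.mp hq
  obtain ⟨r, hr, f_eq⟩ := exists_eq_aeval_projCoord hom hl hf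
  obtain ⟨n, rfl⟩ := Nat.exists_eq_succ_of_ne_zero hd
  obtain ⟨ℓ, hℓ, rfl⟩ := exists_eq_prod_isHomogeneous_one hr
  let m : Fin (n + 1) → MvPolynomial (Fin 3) k := fun i =>
    aeval (fun j => projCoord q l (l.succAbove j)) (ℓ i)
  replace f_eq : f = ∏ i, m i := f_eq.trans (map_prod _ _ _)
  have hom_m : ∀ i, (m i).IsHomogeneous 1 := fun i => by
    simpa only [one_mul] using (hℓ i).aeval _ fun j => isHomogeneous_projCoord q l (l.succAbove j)
  have vanish : ∀ i, eval q (m i) = 0 := fun i => by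
    have eval_m : eval q (m i) = constantCoeff (ℓ i) := by
      simpa [m, eval_projCoord hl] using
        comp_aeval_apply (fun j => projCoord q l (l.succAbove j)) (aeval q) (ℓ i)
    rw [eval_m, constantCoeff_eq_zero_of_isHomogeneous one_ne_zero (hℓ i)]
  refine ⟨m, hom_m, vanish, fun i j hij => ?_, f_eq⟩
  exact ne_smul_of_squarefree_prod (f_eq ▸ hsf) hij fun isUnit_m =>
    not_isUnit_zero (vanish j ▸ isUnit_m.map (eval q))

end PlaneCurves

/-- Hesse's claim holds in `ℙ²`: for a squarefree homogeneous polynomial `f` of degree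
`d ≥ 2` in three variables over an algebraically closed field of characteristic zero,
the Hessian of `f` vanishes identically iff `f` is a product of `d` pairwise
non-proportional linear forms all vanishing at a common nonzero point of `k³`,
i.e. iff `V(f)` consists of `d` distinct lines through a common point. -/
theorem stmt1 {k : Type*} [Field k] [IsAlgClosed k] [CharZero k]
    (f : MvPolynomial (Fin 3) k) (d : ℕ) (hd : 2 ≤ d)
    (hsf : Squarefree f) (hhom : f.IsHomogeneous d) :
    hessianDet f = 0 ↔
      ∃ p : Fin 3 → k, p ≠ 0 ∧
        ∃ ℓ : Fin d → MvPolynomial (Fin 3) k,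
          (∀ i, (ℓ i).IsHomogeneous 1) ∧
          (∀ i, eval p (ℓ i) = 0) ∧
          (∀ i j, i ≠ j → ∀ c : k, ℓ i ≠ c • ℓ j) ∧
          f = ∏ i, ℓ i := by
  rw [hessianDet_eq_zero_iff_exists_dirDeriv_eq_zero hd hsf hhom]
  exact exists_congr fun p => and_congr_right fun hp =>
    dirDeriv_eq_zero_iff_exists_eq_prod (by omega) hsf hhom hp
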